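/- Let p > 2 be prime and A ⊆ ZMod p with |A| = δp and δ ≥ C p^{−1/12} for a suitable absolute constant C. Then the number of pairs (x,y) ∈ (ZMod p)² with x ∈ A, x + y ∈ A, and x + y² ∈ A is at least c δ³ p² for an absolute constant c > 0. -/

import Mathlib

open Finset

/-!
Write `q` for the order of the field `K`. Expanding `f` and `g` into characters, the Fourier
coefficient of `∑ y, f (x + y) * g (x + y ^ 2)` at `k` is, up to the main term, a sum over
`m + n = k` of the coefficients `F m * G n` of `f` and `g` against the Gauss sum
`∑ y, ψ (m * y + n * y ^ 2)` with `n ≠ 0`. Absolute values alone give no decay in `q`, since each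
Gauss sum is only known to be `O(√q)`. Opening the square of the `L²` norm differences the Gauss
sums, and completing the square makes each difference, with shift `h ≠ 0`, a bilinear form in
`(u, v)` whose kernel has quadratic phase `-(h / (4 * v * (v + h))) * u ^ 2` in `u`. The Gram
matrix of its columns is again made of Gauss sums, degenerate only for `w = v` and `w = -v - h`,
so the `TT*` method bounds the form with a saving of `q ^ (1 / 4)`. This is the `L²` decay of
order `q ^ (-1 / 8)` of the bilinear average, and pairing the average with an indicator function
counts the configurations.
-/

open scoped ComplexConjugate

section SchurTest

theorem sum_sum_mul_mul_le_of_symm {β R : Type*} [Fintype β] [CommRing R] [LinearOrder R]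
    [IsStrictOrderedRing R] {M : β → β → R} {B : R} (hM : ∀ v w, 0 ≤ M v w)
    (hsymm : ∀ v w, M v w = M w v) (hB : ∀ v, ∑ w, M v w ≤ B) (a : β → R) :
    ∑ v, ∑ w, a v * a w * M v w ≤ B * ∑ v, a v ^ 2 := by
  have hrow : ∑ v, ∑ w, a v ^ 2 * M v w ≤ B * ∑ v, a v ^ 2 := by
    simp_rw [← mul_sum, mul_comm (a _ ^ 2), mul_sum]
    gcongr with v
    exact hB v
  have hcol : ∑ v, ∑ w, a w ^ 2 * M v w = ∑ v, ∑ w, a v ^ 2 * M v w := by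
    rw [sum_comm]
    simp_rw [hsymm]
  have hamgm : 2 * ∑ v, ∑ w, a v * a w * M v w
      ≤ ∑ v, ∑ w, a v ^ 2 * M v w + ∑ v, ∑ w, a w ^ 2 * M v w := by
    simp_rw [mul_sum, ← sum_add_distrib, ← add_mul, ← mul_assoc]
    gcongr with v _ w
    · exact hM v w
    · exact two_mul_le_add_sq (a v) (a w)
  linarith

variable {𝕜 α β : Type*} [RCLike 𝕜] [Fintype α] [Fintype β]

theorem ofReal_sum_norm_sq_sum_mul (k : α → β → 𝕜) (b : β → 𝕜) :
    ((∑ u, ‖∑ v, b v * k u v‖ ^ 2 : ℝ) : 𝕜)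
      = ∑ v, ∑ w, b v * conj (b w) * ∑ u, k u v * conj (k u w) := by
  push_cast
  simp_rw [← RCLike.mul_conj, map_sum, sum_mul_sum, mul_sum]
  rw [sum_comm]
  refine sum_congr rfl fun v _ ↦ ?_
  rw [sum_comm]
  refine sum_congr rfl fun w _ ↦ sum_congr rfl fun u _ ↦ ?_
  rw [map_mul]
  ring

/- The `TT*` method: the Gram matrix `M` of the columns of `k` is the kernel of `T*T`, to which
Schur's test applies. -/
theorem sum_norm_sq_sum_mul_le {k : α → β → 𝕜} {B : ℝ}
    (hB : ∀ v, ∑ w, ‖∑ u, k u v * conj (k u w)‖ ≤ B) (b : β → 𝕜) :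
    ∑ u, ‖∑ v, b v * k u v‖ ^ 2 ≤ B * ∑ v, ‖b v‖ ^ 2 := by
  set M : β → β → ℝ := fun v w ↦ ‖∑ u, k u v * conj (k u w)‖
  have hsymm (v w : β) : M v w = M w v := by
    simp only [M]
    rw [← RCLike.norm_conj, map_sum]
    simp only [map_mul, RCLike.conj_conj, mul_comm]
  calc ∑ u, ‖∑ v, b v * k u v‖ ^ 2
      = ‖∑ v, ∑ w, b v * conj (b w) * ∑ u, k u v * conj (k u w)‖ := by
        rw [← ofReal_sum_norm_sq_sum_mul, RCLike.norm_ofReal, abs_of_nonneg (by positivity)]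
    _ ≤ ∑ v, ∑ w, ‖b v‖ * ‖b w‖ * M v w := by
        refine norm_sum_le_of_le _ fun v _ ↦ norm_sum_le_of_le _ fun w _ ↦ ?_
        rw [norm_mul, norm_mul, RCLike.norm_conj]
    _ ≤ B * ∑ v, ‖b v‖ ^ 2 :=
        sum_sum_mul_mul_le_of_symm (fun _ _ ↦ norm_nonneg _) hsymm hB fun v ↦ ‖b v‖

theorem norm_sum_mul_sq_le (a b : α → 𝕜) :
    ‖∑ u, a u * b u‖ ^ 2 ≤ (∑ u, ‖a u‖ ^ 2) * ∑ u, ‖b u‖ ^ 2 :=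
  calc ‖∑ u, a u * b u‖ ^ 2 ≤ (∑ u, ‖a u‖ * ‖b u‖) ^ 2 := by
        gcongr
        exact norm_sum_le_of_le _ fun u _ ↦ norm_mul_le _ _
    _ ≤ (∑ u, ‖a u‖ ^ 2) * ∑ u, ‖b u‖ ^ 2 := sum_mul_sq_le_sq_mul_sq _ _ _

theorem norm_sum_sum_mul_le {k : α → β → 𝕜} {B : ℝ}
    (hB : ∀ v, ∑ w, ‖∑ u, k u v * conj (k u w)‖ ≤ B) (a : α → 𝕜) (b : β → 𝕜) :
    ‖∑ u, ∑ v, a u * b v * k u v‖ ≤ √(B * ((∑ u, ‖a u‖ ^ 2) * ∑ v, ‖b v‖ ^ 2)) := by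
  refine Real.le_sqrt_of_sq_le ?_
  simp_rw [mul_assoc, ← mul_sum]
  calc ‖∑ u, a u * ∑ v, b v * k u v‖ ^ 2
      ≤ (∑ u, ‖a u‖ ^ 2) * ∑ u, ‖∑ v, b v * k u v‖ ^ 2 := norm_sum_mul_sq_le _ _
    _ ≤ (∑ u, ‖a u‖ ^ 2) * (B * ∑ v, ‖b v‖ ^ 2) := by
        gcongr
        exact sum_norm_sq_sum_mul_le hB b
    _ = B * ((∑ u, ‖a u‖ ^ 2) * ∑ v, ‖b v‖ ^ 2) := mul_left_comm _ _ _

end SchurTest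

section Differencing

theorem sum_sum_mul_comp_equiv {α β γ R : Type*} [Fintype α] [Fintype β] [Fintype γ]
    [NonUnitalNonAssocSemiring R] (e : α → β ≃ γ) (a : α → R) (b : γ → R) :
    ∑ h, ∑ u, a u * b (e u h) = (∑ u, a u) * ∑ v, b v := by
  rw [sum_comm, sum_mul]
  refine sum_congr rfl fun u _ ↦ ?_
  rw [← mul_sum, (e u).sum_comp]

theorem ofReal_sum_norm_sq_antidiagonal {𝕜 G : Type*} [RCLike 𝕜] [AddCommGroup G] [Fintype G]
    (W : G → G → 𝕜) :
    ((∑ k, ‖∑ n, W (k - n) n‖ ^ 2 : ℝ) : 𝕜)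
      = ∑ h, ∑ u, ∑ v, W u v * conj (W (u - h) (v + h)) := by
  push_cast
  simp_rw [← RCLike.mul_conj, map_sum, sum_mul_sum]
  calc ∑ k, ∑ n, ∑ n', W (k - n) n * conj (W (k - n') n')
      = ∑ k, ∑ n, ∑ h, W (k - n) n * conj (W (k - n - h) (n + h)) := by
        refine sum_congr rfl fun k _ ↦ sum_congr rfl fun n _ ↦ ?_
        rw [← Equiv.sum_comp (Equiv.addLeft n)]
        simp only [Equiv.coe_addLeft, sub_sub]
    _ = ∑ h, ∑ n, ∑ k, W (k - n) n * conj (W (k - n - h) (n + h)) := by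
        rw [sum_comm_cycle]
        exact sum_congr rfl fun h _ ↦ sum_comm
    _ = ∑ h, ∑ n, ∑ u, W u n * conj (W (u - h) (n + h)) :=
        sum_congr rfl fun h _ ↦ sum_congr rfl fun n _ ↦
          Equiv.sum_comp (Equiv.subRight n) fun u ↦ W u n * conj (W (u - h) (n + h))
    _ = ∑ h, ∑ u, ∑ v, W u v * conj (W (u - h) (v + h)) := sum_congr rfl fun h _ ↦ sum_comm

theorem sum_sqrt_autocorrelation_mul_le {𝕜 G : Type*} [RCLike 𝕜] [AddCommGroup G] [Fintype G]
    (f g : G → 𝕜) :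
    ∑ h, √((∑ u, ‖f u * conj (f (u - h))‖ ^ 2) * ∑ v, ‖g v * conj (g (v + h))‖ ^ 2)
      ≤ (∑ u, ‖f u‖ ^ 2) * ∑ v, ‖g v‖ ^ 2 := by
  simp_rw [norm_mul, RCLike.norm_conj, mul_pow]
  calc ∑ h, √((∑ u, ‖f u‖ ^ 2 * ‖f (u - h)‖ ^ 2) * ∑ v, ‖g v‖ ^ 2 * ‖g (v + h)‖ ^ 2)
      = ∑ h, √(∑ u, ‖f u‖ ^ 2 * ‖f (u - h)‖ ^ 2) * √(∑ v, ‖g v‖ ^ 2 * ‖g (v + h)‖ ^ 2) :=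
        sum_congr rfl fun h _ ↦ Real.sqrt_mul (by positivity) _
    _ ≤ √(∑ h, ∑ u, ‖f u‖ ^ 2 * ‖f (u - h)‖ ^ 2) * √(∑ h, ∑ v, ‖g v‖ ^ 2 * ‖g (v + h)‖ ^ 2) :=
        Real.sum_sqrt_mul_sqrt_le _ (fun _ ↦ by positivity) fun _ ↦ by positivity
    _ = √((∑ u, ‖f u‖ ^ 2) * ∑ u, ‖f u‖ ^ 2) * √((∑ v, ‖g v‖ ^ 2) * ∑ v, ‖g v‖ ^ 2) := by
        rw [← sum_sum_mul_comp_equiv Equiv.subLeft fun u ↦ ‖f u‖ ^ 2,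
          ← sum_sum_mul_comp_equiv Equiv.addLeft fun v ↦ ‖g v‖ ^ 2]
        simp only [Equiv.subLeft_apply, Equiv.coe_addLeft]
    _ = (∑ u, ‖f u‖ ^ 2) * ∑ v, ‖g v‖ ^ 2 := by
        rw [Real.sqrt_mul_self (by positivity), Real.sqrt_mul_self (by positivity)]

end Differencing

section Fourier

variable {R : Type*} [CommRing R] [Fintype R] {ψ : AddChar R ℂ}

/-- The unnormalized Fourier transform on a finite ring, whose frequencies are identified with the
ring itself through the character `ψ`. For `R = ZMod N` and the standard character this is
`ZMod.dft`. -/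
noncomputable def charTransform (ψ : AddChar R ℂ) (f : R → ℂ) (n : R) : ℂ :=
  ∑ x, f x * ψ (-(x * n))

theorem charTransform_zero (f : R → ℂ) : charTransform ψ f 0 = ∑ x, f x := by
  simp [charTransform]

theorem sum_apply_mul_conj_apply_mul [DecidableEq R] (hψ : ψ.IsPrimitive) (x y : R) :
    ∑ n, ψ (-(x * n)) * conj (ψ (-(y * n))) = if x = y then (Fintype.card R : ℂ) else 0 := by
  calc ∑ n, ψ (-(x * n)) * conj (ψ (-(y * n))) = ∑ n, ψ (n * (y - x)) := by
        refine sum_congr rfl fun n _ ↦ ?_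
        rw [← AddChar.map_neg_eq_conj, ← AddChar.map_add_eq_mul]
        ring_nf
    _ = if x = y then (Fintype.card R : ℂ) else 0 := by
        simp only [AddChar.sum_mulShift _ hψ, sub_eq_zero, eq_comm, Nat.cast_ite, Nat.cast_zero]

theorem charTransform_charTransform (hψ : ψ.IsPrimitive) (f : R → ℂ) (x : R) :
    charTransform ψ (charTransform ψ f) (-x) = Fintype.card R * f x := by
  classical
  calc charTransform ψ (charTransform ψ f) (-x)
      = ∑ z, f z * ∑ n, ψ (-(z * n)) * conj (ψ (-(x * n))) := by
        simp_rw [charTransform, sum_mul, mul_sum]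
        rw [sum_comm]
        refine sum_congr rfl fun z _ ↦ sum_congr rfl fun n _ ↦ ?_
        rw [← AddChar.map_neg_eq_conj, mul_assoc, mul_neg, mul_comm n x]
    _ = Fintype.card R * f x := by
        simp [sum_apply_mul_conj_apply_mul hψ, mul_comm]

theorem sum_norm_sq_charTransform (hψ : ψ.IsPrimitive) (f : R → ℂ) :
    ∑ n, ‖charTransform ψ f n‖ ^ 2 = Fintype.card R * ∑ x, ‖f x‖ ^ 2 := by
  classical
  refine Complex.ofReal_injective ?_
  simp_rw [charTransform]
  refine (ofReal_sum_norm_sq_sum_mul (fun n x ↦ ψ (-(x * n))) f).trans ?_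
  simp [sum_apply_mul_conj_apply_mul hψ, Complex.mul_conj', mul_sum, mul_comm]

theorem norm_sum_apply_quadratic_sq (hψ : ψ.IsPrimitive) {a : R} (ha : IsUnit (2 * a)) (b c : R) :
    ‖∑ u, ψ (a * u ^ 2 + b * u + c)‖ ^ 2 = Fintype.card R := by
  classical
  refine Complex.ofReal_injective ?_
  rw [Complex.ofReal_pow, ← Complex.conj_mul', map_sum, sum_mul_sum]
  calc ∑ u, ∑ w, conj (ψ (a * u ^ 2 + b * u + c)) * ψ (a * w ^ 2 + b * w + c)
      = ∑ u, ∑ t, ψ (a * t ^ 2 + b * t) * ψ (u * (2 * a * t)) := by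
        refine sum_congr rfl fun u _ ↦ ?_
        rw [← Equiv.sum_comp (Equiv.addLeft u)]
        refine sum_congr rfl fun t _ ↦ ?_
        simp only [← AddChar.map_neg_eq_conj, ← AddChar.map_add_eq_mul, Equiv.coe_addLeft]
        ring_nf
    _ = ∑ t, ψ (a * t ^ 2 + b * t) * ∑ u, ψ (u * (2 * a * t)) := by
        rw [sum_comm]
        simp only [mul_sum]
    _ = Fintype.card R := by
        simp [AddChar.sum_mulShift _ hψ, ha.mul_right_eq_zero]

end Fourier

theorem four_ne_zero_of_two_ne_zero {R : Type*} [Semiring R] [NoZeroDivisors R]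
    (h2 : (2 : R) ≠ 0) : (4 : R) ≠ 0 := by
  rw [show (4 : R) = 2 * 2 by norm_num]
  exact mul_ne_zero h2 h2

theorem add_sqrt_le_three_mul_rpow {q : ℝ} (hq : 1 ≤ q) :
    q + √(3 * (q ^ 3 * √q)) ≤ 3 * q ^ (7 / 4 : ℝ) := by
  have hlin : q ≤ q ^ (7 / 4 : ℝ) := Real.self_le_rpow_of_one_le hq (by norm_num)
  have hsq : q ^ 3 * √q = (q ^ (7 / 4 : ℝ)) ^ 2 := by
    rw [← Real.rpow_mul_natCast (by positivity), Real.sqrt_eq_rpow, ← Real.rpow_natCast q 3,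
      ← Real.rpow_add (by positivity)]
    norm_num
  have hsqrt : √(3 * (q ^ 3 * √q)) ≤ 2 * q ^ (7 / 4 : ℝ) := by
    rw [hsq]
    refine Real.sqrt_le_iff.2 ⟨by positivity, ?_⟩
    rw [mul_pow]
    gcongr
    norm_num
  linarith

section Parabola

variable {K : Type*} [Field K] [Fintype K] {ψ : AddChar K ℂ}

open Classical in
/-- The Gauss sum `∑ y, ψ (m * y + n * y ^ 2)`, set to `0` at the degenerate frequency `n = 0`. -/
noncomputable def parabolaGaussSum (ψ : AddChar K ℂ) (m n : K) : ℂ :=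
  if n = 0 then 0 else ∑ y, ψ (m * y + n * y ^ 2)

@[simp]
theorem parabolaGaussSum_zero_right (m : K) : parabolaGaussSum ψ m 0 = 0 :=
  if_pos rfl

theorem parabolaGaussSum_of_ne_zero (m : K) {n : K} (hn : n ≠ 0) :
    parabolaGaussSum ψ m n = ∑ y, ψ (m * y + n * y ^ 2) :=
  if_neg hn

theorem sum_apply_parabola [DecidableEq K] (hψ : ψ.IsPrimitive) (m n : K) :
    ∑ y, ψ (m * y + n * y ^ 2)
      = parabolaGaussSum ψ m n
        + if n = 0 then (if m = 0 then (Fintype.card K : ℂ) else 0) else 0 := by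
  by_cases hn : n = 0
  · simp [hn, mul_comm m, AddChar.sum_mulShift _ hψ]
  · simp [parabolaGaussSum_of_ne_zero, hn]

/-- The convolution of `F` and `G` weighted by Gauss sums. It is formed on the Fourier side; see
`charTransform_gaussConv`. -/
noncomputable def gaussConv (ψ : AddChar K ℂ) (F G : K → ℂ) (k : K) : ℂ :=
  ∑ n, F (k - n) * G n * parabolaGaussSum ψ (k - n) n

/-- The bilinear sum along the parabola, `card K` times the average `A_Γ(f, g)`. -/
def parabolaConv (f g : K → ℂ) (x : K) : ℂ :=
  ∑ y, f (x + y) * g (x + y ^ 2)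

theorem charTransform_gaussConv (hψ : ψ.IsPrimitive) (f g : K → ℂ) (x : K) :
    charTransform ψ (gaussConv ψ (charTransform ψ f) (charTransform ψ g)) (-x)
      = (Fintype.card K : ℂ) ^ 2 * parabolaConv f g x
        - Fintype.card K * ((∑ y, f y) * ∑ y, g y) := by
  classical
  rw [← charTransform_zero (ψ := ψ) f, ← charTransform_zero (ψ := ψ) g, eq_sub_iff_add_eq]
  set F := charTransform ψ f with hF
  set G := charTransform ψ g with hG
  symm
  calc (Fintype.card K : ℂ) ^ 2 * parabolaConv f g x
      = ∑ y, charTransform ψ F (-(x + y)) * charTransform ψ G (-(x + y ^ 2)) := by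
        simp_rw [hF, hG, charTransform_charTransform hψ, parabolaConv, mul_sum]
        exact sum_congr rfl fun y _ ↦ by ring
    _ = ∑ n, ∑ m, F m * G n * ψ ((m + n) * x) * ∑ y, ψ (m * y + n * y ^ 2) := by
        simp_rw [charTransform, sum_mul_sum, mul_sum]
        rw [sum_comm_cycle]
        refine sum_congr rfl fun n _ ↦ ?_
        rw [sum_comm]
        refine sum_congr rfl fun m _ ↦ sum_congr rfl fun y _ ↦ ?_
        rw [mul_mul_mul_comm, mul_assoc _ (ψ _), ← AddChar.map_add_eq_mul,
          ← AddChar.map_add_eq_mul]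
        ring_nf
    _ = ∑ n, ∑ m, F m * G n * parabolaGaussSum ψ m n * ψ ((m + n) * x)
          + Fintype.card K * (F 0 * G 0) := by
        simp_rw [sum_apply_parabola hψ, mul_add, sum_add_distrib]
        congr 1
        · exact sum_congr rfl fun n _ ↦ sum_congr rfl fun m _ ↦ mul_right_comm ..
        · simp [mul_comm]
    _ = charTransform ψ (gaussConv ψ F G) (-x) + Fintype.card K * (F 0 * G 0) := by
        congr 1
        simp_rw [charTransform, gaussConv, sum_mul, mul_neg, neg_neg]
        refine (sum_comm.trans (sum_congr rfl fun n _ ↦ ?_)).symm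
        rw [← Equiv.sum_comp (Equiv.addRight n)]
        simp only [Equiv.coe_addRight, add_sub_cancel_right]

theorem card_parabola_eq_sum_mul_parabolaConv [DecidableEq K] (A B C : Finset K) :
    (#{xy : K × K | xy.1 ∈ A ∧ xy.1 + xy.2 ∈ B ∧ xy.1 + xy.2 ^ 2 ∈ C} : ℂ)
      = ∑ x, (if x ∈ A then 1 else 0)
          * parabolaConv (fun y ↦ if y ∈ B then 1 else 0) (fun y ↦ if y ∈ C then 1 else 0) x := by
  simp only [card_filter, Nat.cast_sum, Nat.cast_ite, Nat.cast_one, Nat.cast_zero,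
    Fintype.sum_prod_type, parabolaConv, mul_sum, ite_zero_mul_ite_zero, mul_one]

/-- The kernel `(u, v) ↦ S(u, v) conj S(u - h, v + h)` that differencing the Gauss sums
`S = parabolaGaussSum ψ` in the direction `(-1, 1)` produces. -/
noncomputable def diffKernel (ψ : AddChar K ℂ) (h u v : K) : ℂ :=
  parabolaGaussSum ψ u v * conj (parabolaGaussSum ψ (u - h) (v + h))

theorem diffKernel_eq_zero {h v : K} (hv : v * (v + h) = 0) (u : K) : diffKernel ψ h u v = 0 := by
  obtain hv | hv := mul_eq_zero.1 hv <;> simp [diffKernel, hv]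

variable [NeZero (2 : K)]

theorem parabolaGaussSum_eq_mul {n : K} (hn : n ≠ 0) (m : K) :
    parabolaGaussSum ψ m n = parabolaGaussSum ψ 0 n * ψ (-(m ^ 2 / (4 * n))) := by
  have complete_square (y : K) :
      m * (y - m / (2 * n)) + n * (y - m / (2 * n)) ^ 2 = n * y ^ 2 - m ^ 2 / (4 * n) := by
    have h2 : (2 : K) ≠ 0 := two_ne_zero
    have h4 : (4 : K) ≠ 0 := four_ne_zero_of_two_ne_zero h2
    field_simp
    ring
  simp only [parabolaGaussSum_of_ne_zero _ hn, sum_mul]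
  rw [← Equiv.sum_comp (Equiv.subRight (m / (2 * n)))]
  refine sum_congr rfl fun y _ ↦ ?_
  rw [Equiv.subRight_apply, complete_square, ← AddChar.map_add_eq_mul]
  ring_nf

theorem norm_parabolaGaussSum_sq_le (hψ : ψ.IsPrimitive) (m n : K) :
    ‖parabolaGaussSum ψ m n‖ ^ 2 ≤ Fintype.card K := by
  obtain rfl | hn := eq_or_ne n 0
  · simp
  · have h2n : IsUnit (2 * n) := (mul_ne_zero two_ne_zero hn).isUnit
    rw [← norm_sum_apply_quadratic_sq hψ h2n m 0, parabolaGaussSum_of_ne_zero _ hn]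
    simp only [add_zero, add_comm (n * _ ^ 2), le_refl]

theorem norm_diffKernel_le (hψ : ψ.IsPrimitive) (h u v : K) :
    ‖diffKernel ψ h u v‖ ≤ Fintype.card K := by
  rw [diffKernel, norm_mul, Complex.norm_conj]
  linarith [two_mul_le_add_sq ‖parabolaGaussSum ψ u v‖ ‖parabolaGaussSum ψ (u - h) (v + h)‖,
    norm_parabolaGaussSum_sq_le hψ u v, norm_parabolaGaussSum_sq_le hψ (u - h) (v + h)]

theorem diffKernel_eq_mul {h v : K} (hv : v * (v + h) ≠ 0) (u : K) :
    diffKernel ψ h u v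
      = diffKernel ψ h 0 v * ψ (-(h / (4 * (v * (v + h)))) * u ^ 2 - h / (2 * (v + h)) * u) := by
  obtain ⟨hv₀, hvh⟩ := mul_ne_zero_iff.1 hv
  have phase : -(u ^ 2 / (4 * v)) + (u - h) ^ 2 / (4 * (v + h)) = (0 - h) ^ 2 / (4 * (v + h))
      + (-(h / (4 * (v * (v + h)))) * u ^ 2 - h / (2 * (v + h)) * u) := by
    have h2 : (2 : K) ≠ 0 := two_ne_zero
    have h4 : (4 : K) ≠ 0 := four_ne_zero_of_two_ne_zero h2
    field_simp
    ring
  simp only [diffKernel]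
  rw [parabolaGaussSum_eq_mul hv₀, parabolaGaussSum_eq_mul hvh (u - h),
    parabolaGaussSum_eq_mul hvh (0 - h)]
  simp only [map_mul, ← AddChar.map_neg_eq_conj, neg_neg]
  have phase' := congrArg ψ phase
  simp only [AddChar.map_add_eq_mul] at phase'
  linear_combination parabolaGaussSum ψ 0 v * conj (parabolaGaussSum ψ 0 (v + h)) * phase'

theorem norm_sum_diffKernel_mul_conj_le (hψ : ψ.IsPrimitive) (h v w : K) :
    ‖∑ u, diffKernel ψ h u v * conj (diffKernel ψ h u w)‖ ≤ (Fintype.card K : ℝ) ^ 3 :=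
  calc ‖∑ u, diffKernel ψ h u v * conj (diffKernel ψ h u w)‖
      ≤ ∑ _u : K, (Fintype.card K : ℝ) * Fintype.card K := by
        refine norm_sum_le_of_le _ fun u _ ↦ ?_
        rw [norm_mul, Complex.norm_conj]
        gcongr <;> exact norm_diffKernel_le hψ _ _ _
    _ = (Fintype.card K : ℝ) ^ 3 := by
        rw [sum_const, card_univ, nsmul_eq_mul]
        ring

theorem norm_sum_diffKernel_mul_conj_le_of_ne (hψ : ψ.IsPrimitive) {h v w : K} (hh : h ≠ 0)
    (hvw : v * (v + h) ≠ w * (w + h)) :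
    ‖∑ u, diffKernel ψ h u v * conj (diffKernel ψ h u w)‖
      ≤ (Fintype.card K : ℝ) ^ 2 * √(Fintype.card K) := by
  by_cases hv : v * (v + h) = 0
  · simp only [diffKernel_eq_zero hv, zero_mul, sum_const_zero, norm_zero]
    positivity
  by_cases hw : w * (w + h) = 0
  · simp only [diffKernel_eq_zero hw, map_zero, mul_zero, sum_const_zero, norm_zero]
    positivity
  set a : K := h / (4 * (w * (w + h))) - h / (4 * (v * (v + h))) with ha
  set b : K := h / (2 * (w + h)) - h / (2 * (v + h)) with hb
  have ha₀ : a ≠ 0 := by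
    rw [ha, sub_ne_zero, ne_eq, div_eq_mul_inv, div_eq_mul_inv, mul_right_inj' hh, inv_inj,
      mul_right_inj' (four_ne_zero_of_two_ne_zero two_ne_zero)]
    exact hvw.symm
  have hsum : ∑ u, diffKernel ψ h u v * conj (diffKernel ψ h u w)
      = diffKernel ψ h 0 v * conj (diffKernel ψ h 0 w) * ∑ u, ψ (a * u ^ 2 + b * u + 0) := by
    rw [mul_sum]
    refine sum_congr rfl fun u _ ↦ ?_
    rw [diffKernel_eq_mul hv, diffKernel_eq_mul hw, map_mul, mul_mul_mul_comm,
      ← AddChar.map_neg_eq_conj, ← AddChar.map_add_eq_mul, ha, hb]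
    ring_nf
  rw [hsum, norm_mul, norm_mul, Complex.norm_conj, sq (Fintype.card K : ℝ)]
  gcongr
  · exact norm_diffKernel_le hψ _ _ _
  · exact norm_diffKernel_le hψ _ _ _
  · exact Real.le_sqrt_of_sq_le
      (norm_sum_apply_quadratic_sq hψ (mul_ne_zero two_ne_zero ha₀).isUnit b 0).le

theorem sum_norm_sum_diffKernel_mul_conj_le (hψ : ψ.IsPrimitive) {h : K} (hh : h ≠ 0) (v : K) :
    ∑ w, ‖∑ u, diffKernel ψ h u v * conj (diffKernel ψ h u w)‖
      ≤ 3 * ((Fintype.card K : ℝ) ^ 3 * √(Fintype.card K)) := by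
  classical
  set q : ℝ := (Fintype.card K : ℝ) with hq
  have hq1 : 1 ≤ q := Nat.one_le_cast.2 Fintype.card_pos
  have card_diagonal : (#{w | v * (v + h) = w * (w + h)} : ℝ) ≤ 2 := by
    have hsub : ({w | v * (v + h) = w * (w + h)} : Finset K) ⊆ {v, -v - h} := by
      intro w hw
      have hfactor : (w - v) * (w - (-v - h)) = 0 := by
        linear_combination -(mem_filter.1 hw).2
      simpa only [mem_insert, mem_singleton, mul_eq_zero, sub_eq_zero] using hfactor
    exact_mod_cast (card_le_card hsub).trans card_le_two
  calc ∑ w, ‖∑ u, diffKernel ψ h u v * conj (diffKernel ψ h u w)‖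
      ≤ ∑ w, (q ^ 2 * √q + if v * (v + h) = w * (w + h) then q ^ 3 else 0) := by
        refine sum_le_sum fun w _ ↦ ?_
        split_ifs with hvw
        · exact (norm_sum_diffKernel_mul_conj_le hψ h v w).trans
            (le_add_of_nonneg_left (by positivity))
        · rw [add_zero]
          exact norm_sum_diffKernel_mul_conj_le_of_ne hψ hh hvw
    _ = q ^ 3 * √q + #{w | v * (v + h) = w * (w + h)} * q ^ 3 := by
        rw [sum_add_distrib, sum_const, card_univ, nsmul_eq_mul, ← sum_filter, sum_const,
          nsmul_eq_mul, ← hq]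
        ring
    _ ≤ q ^ 3 * √q + 2 * (q ^ 3 * √q) := by
        gcongr
        exact le_mul_of_one_le_right (by positivity) (Real.one_le_sqrt.2 hq1)
    _ = 3 * (q ^ 3 * √q) := by ring

theorem norm_sum_sum_mul_diffKernel_le (hψ : ψ.IsPrimitive) (h : K) (a b : K → ℂ) :
    ‖∑ u, ∑ v, a u * b v * diffKernel ψ h u v‖
      ≤ Fintype.card K * ((∑ u, ‖a u‖) * ∑ v, ‖b v‖) := by
  rw [sum_mul_sum, mul_sum]
  simp_rw [mul_sum]
  refine norm_sum_le_of_le _ fun u _ ↦ norm_sum_le_of_le _ fun v _ ↦ ?_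
  rw [norm_mul, norm_mul, mul_comm]
  gcongr
  exact norm_diffKernel_le hψ h u v

theorem sum_norm_sq_gaussConv_le (hψ : ψ.IsPrimitive) (F G : K → ℂ) :
    ∑ k, ‖gaussConv ψ F G k‖ ^ 2
      ≤ 3 * (Fintype.card K : ℝ) ^ (7 / 4 : ℝ) * ((∑ u, ‖F u‖ ^ 2) * ∑ v, ‖G v‖ ^ 2) := by
  classical
  set q : ℝ := (Fintype.card K : ℝ)
  set E : ℝ := (∑ u, ‖F u‖ ^ 2) * ∑ v, ‖G v‖ ^ 2
  set Fd : K → K → ℂ := fun h u ↦ F u * conj (F (u - h))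
  set Gd : K → K → ℂ := fun h v ↦ G v * conj (G (v + h))
  have differencing : ∑ k, ‖gaussConv ψ F G k‖ ^ 2
      = ‖∑ h, ∑ u, ∑ v, Fd h u * Gd h v * diffKernel ψ h u v‖ := by
    rw [← abs_of_nonneg (a := ∑ k, ‖gaussConv ψ F G k‖ ^ 2) (by positivity), ← Real.norm_eq_abs,
      ← Complex.norm_real]
    refine congrArg norm ((ofReal_sum_norm_sq_antidiagonal
      fun u v ↦ F u * G v * parabolaGaussSum ψ u v).trans ?_)
    refine sum_congr rfl fun h _ ↦ sum_congr rfl fun u _ ↦ sum_congr rfl fun v _ ↦ ?_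
    simp only [Fd, Gd, diffKernel, map_mul]
    ring
  have hterm (h : K) : ‖∑ u, ∑ v, Fd h u * Gd h v * diffKernel ψ h u v‖
      ≤ (if h = 0 then q * E else 0)
        + √(3 * (q ^ 3 * √q)) * √((∑ u, ‖Fd h u‖ ^ 2) * ∑ v, ‖Gd h v‖ ^ 2) := by
    split_ifs with hh
    · refine (norm_sum_sum_mul_diffKernel_le hψ h _ _).trans
        (le_of_eq_of_le ?_ (le_add_of_nonneg_right (by positivity)))
      simp only [hh, Fd, Gd, sub_zero, add_zero, norm_mul, RCLike.norm_conj, ← sq, q, E]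
    · rw [zero_add, ← Real.sqrt_mul (by positivity)]
      exact norm_sum_sum_mul_le (sum_norm_sum_diffKernel_mul_conj_le hψ hh) _ _
  calc ∑ k, ‖gaussConv ψ F G k‖ ^ 2
      ≤ q * E + √(3 * (q ^ 3 * √q)) * ∑ h, √((∑ u, ‖Fd h u‖ ^ 2) * ∑ v, ‖Gd h v‖ ^ 2) := by
        rw [differencing, mul_sum, ← Fintype.sum_ite_eq' (0 : K) fun _ ↦ q * E, ← sum_add_distrib]
        exact norm_sum_le_of_le _ fun h _ ↦ hterm h
    _ ≤ q * E + √(3 * (q ^ 3 * √q)) * E := by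
        gcongr
        exact sum_sqrt_autocorrelation_mul_le F G
    _ ≤ 3 * q ^ (7 / 4 : ℝ) * E := by
        rw [← add_mul]
        gcongr
        exact add_sqrt_le_three_mul_rpow (Nat.one_le_cast.2 Fintype.card_pos)

theorem sum_norm_sq_parabolaConv_sub_le (f g : K → ℂ) :
    ∑ x, ‖parabolaConv f g x - (∑ y, f y) * (∑ y, g y) / Fintype.card K‖ ^ 2
      ≤ 3 * (Fintype.card K : ℝ) ^ (3 / 4 : ℝ) * ((∑ y, ‖f y‖ ^ 2) * ∑ y, ‖g y‖ ^ 2) := by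
  obtain ⟨ψ, hψ⟩ : ∃ ψ : AddChar K ℂ, ψ.IsPrimitive :=
    ⟨_, AddChar.FiniteField.primitiveChar_to_Complex_isPrimitive K⟩
  set q : ℝ := (Fintype.card K : ℝ) with hq
  have hq0 : 0 < q := Nat.cast_pos.2 Fintype.card_pos
  set F := charTransform ψ f
  set G := charTransform ψ g
  have norm_charTransform (x : K) : ‖charTransform ψ (gaussConv ψ F G) (-x)‖
      = q ^ 2 * ‖parabolaConv f g x - (∑ y, f y) * (∑ y, g y) / Fintype.card K‖ := by
    have hcard : (Fintype.card K : ℂ) ≠ 0 := Nat.cast_ne_zero.2 Fintype.card_ne_zero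
    rw [charTransform_gaussConv hψ, hq, ← Complex.norm_natCast, ← norm_pow, ← norm_mul]
    congr 1
    field_simp
  refine le_of_mul_le_mul_left ?_ (pow_pos hq0 4)
  calc q ^ 4 * ∑ x, ‖parabolaConv f g x - (∑ y, f y) * (∑ y, g y) / Fintype.card K‖ ^ 2
      = ∑ x, ‖charTransform ψ (gaussConv ψ F G) (-x)‖ ^ 2 := by
        simp_rw [norm_charTransform, mul_pow, ← mul_sum, ← pow_mul]
    _ = q * ∑ k, ‖gaussConv ψ F G k‖ ^ 2 := by
        rw [← sum_norm_sq_charTransform hψ]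
        exact Equiv.sum_comp (Equiv.neg K) fun k ↦ ‖charTransform ψ (gaussConv ψ F G) k‖ ^ 2
    _ ≤ q * (3 * q ^ (7 / 4 : ℝ) * ((∑ n, ‖F n‖ ^ 2) * ∑ n, ‖G n‖ ^ 2)) := by
        gcongr
        exact sum_norm_sq_gaussConv_le hψ F G
    _ = q ^ 4 * (3 * q ^ (3 / 4 : ℝ) * ((∑ y, ‖f y‖ ^ 2) * ∑ y, ‖g y‖ ^ 2)) := by
        rw [sum_norm_sq_charTransform hψ, sum_norm_sq_charTransform hψ,
          show (7 / 4 : ℝ) = 3 / 4 + 1 by norm_num, Real.rpow_add_one hq0.ne']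
        ring

variable [DecidableEq K]

theorem sq_card_parabola_sub_le (A B C : Finset K) :
    ((#{xy : K × K | xy.1 ∈ A ∧ xy.1 + xy.2 ∈ B ∧ xy.1 + xy.2 ^ 2 ∈ C} : ℝ)
        - #A * #B * #C / Fintype.card K) ^ 2
      ≤ 3 * (Fintype.card K : ℝ) ^ (3 / 4 : ℝ) * (#A * #B * #C) := by
  set ind : Finset K → K → ℂ := fun S x ↦ if x ∈ S then 1 else 0 with hind
  have sum_ind (S : Finset K) : ∑ x, ind S x = #S := by simp [hind]
  have sum_norm_sq_ind (S : Finset K) : ∑ x, ‖ind S x‖ ^ 2 = #S := by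
    simp [hind, apply_ite norm, ite_pow]
  set N := #{xy : K × K | xy.1 ∈ A ∧ xy.1 + xy.2 ∈ B ∧ xy.1 + xy.2 ^ 2 ∈ C} with hN
  have count_sub_main : ((N - #A * #B * #C / Fintype.card K : ℝ) : ℂ)
      = ∑ x, ind A x * (parabolaConv (ind B) (ind C) x
          - (∑ y, ind B y) * (∑ y, ind C y) / Fintype.card K) := by
    push_cast
    rw [hN, card_parabola_eq_sum_mul_parabolaConv]
    simp only [mul_sub, sum_sub_distrib, ← sum_mul, sum_ind]
    ring
  calc (N - #A * #B * #C / Fintype.card K : ℝ) ^ 2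
      = ‖∑ x, ind A x * (parabolaConv (ind B) (ind C) x
          - (∑ y, ind B y) * (∑ y, ind C y) / Fintype.card K)‖ ^ 2 := by
        rw [← count_sub_main, Complex.norm_real, Real.norm_eq_abs, sq_abs]
    _ ≤ #A * (3 * (Fintype.card K : ℝ) ^ (3 / 4 : ℝ) * (#B * #C)) := by
        refine (norm_sum_mul_sq_le _ _).trans ?_
        rw [sum_norm_sq_ind A]
        gcongr
        exact (sum_norm_sq_parabolaConv_sub_le _ _).trans_eq (by simp only [sum_norm_sq_ind])
    _ = 3 * (Fintype.card K : ℝ) ^ (3 / 4 : ℝ) * (#A * #B * #C) := by ring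

theorem half_le_card_parabola {A B C : Finset K}
    (hABC : 12 * (Fintype.card K : ℝ) ^ (11 / 4 : ℝ) ≤ #A * #B * #C) :
    #A * #B * #C / (2 * Fintype.card K)
      ≤ (#{xy : K × K | xy.1 ∈ A ∧ xy.1 + xy.2 ∈ B ∧ xy.1 + xy.2 ^ 2 ∈ C} : ℝ) := by
  set q : ℝ := (Fintype.card K : ℝ)
  have hq0 : 0 < q := Nat.cast_pos.2 Fintype.card_pos
  set P : ℝ := #A * #B * #C
  have error_le_half_main : 3 * q ^ (3 / 4 : ℝ) * P ≤ (P / (2 * q)) ^ 2 := by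
    rw [div_pow, le_div_iff₀ (by positivity), sq P]
    calc 3 * q ^ (3 / 4 : ℝ) * P * (2 * q) ^ 2
        = 12 * q ^ (11 / 4 : ℝ) * P := by
          rw [show (11 / 4 : ℝ) = 3 / 4 + (2 : ℕ) by norm_num, Real.rpow_add_natCast hq0.ne']
          ring
      _ ≤ P * P := by gcongr
  have habs := abs_le_of_sq_le_sq' ((sq_card_parabola_sub_le A B C).trans error_le_half_main)
    (by positivity)
  have hmain : P / q = 2 * (P / (2 * q)) := by field_simp
  linarith [habs.1]

theorem parabola_roth_general (A : Finset K) {δ : ℝ} (hA : (#A : ℝ) = δ * Fintype.card K)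
    (hδ : 3 * (Fintype.card K : ℝ) ^ (-(1 / 12) : ℝ) ≤ δ) :
    1 / 2 * δ ^ 3 * (Fintype.card K : ℝ) ^ 2
      ≤ #{xy : K × K | xy.1 ∈ A ∧ xy.1 + xy.2 ∈ A ∧ xy.1 + xy.2 ^ 2 ∈ A} := by
  set q : ℝ := (Fintype.card K : ℝ)
  have hq0 : 0 < q := Nat.cast_pos.2 Fintype.card_pos
  have card_cubed : (#A * #A * #A : ℝ) = δ ^ 3 * q ^ 3 := by rw [hA]; ring
  have dense : 12 * q ^ (11 / 4 : ℝ) ≤ #A * #A * #A :=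
    calc 12 * q ^ (11 / 4 : ℝ) ≤ 27 * q ^ (11 / 4 : ℝ) := by gcongr; norm_num
      _ = (3 * q ^ (-(1 / 12) : ℝ)) ^ 3 * q ^ 3 := by
          rw [mul_pow, ← Real.rpow_mul_natCast hq0.le, mul_assoc, ← Real.rpow_add_natCast hq0.ne']
          norm_num
      _ ≤ #A * #A * #A := by
          rw [card_cubed]
          gcongr
  calc 1 / 2 * δ ^ 3 * q ^ 2 = #A * #A * #A / (2 * q) := by
        rw [card_cubed]
        field_simp
    _ ≤ _ := half_le_card_parabola dense

end Parabola

/-- Roth-type theorem for `x, x+y, x+y²`: there are absolute constants `C, c > 0` such that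
for every prime `p > 2` and every `A ⊆ ZMod p` with `|A| = δp` and `δ ≥ C p^{−1/12}`,
the number of pairs `(x,y)` with `x, x+y, x+y² ∈ A` is at least `c δ³ p²`. -/
theorem parabola_roth :
    ∃ C c : ℝ, 0 < C ∧ 0 < c ∧
      ∀ (p : ℕ) [Fact p.Prime], 2 < p →
        ∀ (A : Finset (ZMod p)) (δ : ℝ), (A.card : ℝ) = δ * p →
          δ ≥ C * (p : ℝ) ^ (-(1/12 : ℝ)) →
          ((Finset.univ.filter fun xy : ZMod p × ZMod p =>
              xy.1 ∈ A ∧ xy.1 + xy.2 ∈ A ∧ xy.1 + xy.2 ^ 2 ∈ A).card : ℝ)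
            ≥ c * δ ^ 3 * (p : ℝ) ^ 2 := by
  refine ⟨3, 1 / 2, by norm_num, by norm_num, fun p _ hp A δ hA hδ ↦ ?_⟩
  have : NeZero (2 : ZMod p) := ⟨Ring.two_ne_zero (by rw [ZMod.ringChar_zmod_n]; exact hp.ne')⟩
  simpa only [ZMod.card] using parabola_roth_general A (δ := δ) (by rwa [ZMod.card])
    (by rwa [ZMod.card])
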